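/- For every integer n ≥ 1 and every p ∈ (1,∞), there exists a single weight w on ℝ^n such that the Hardy–Littlewood maximal operator M is bounded from L^p(w) to L^p(w), while the sparse operator T_S is not bounded from L^p(w) to L^p(w); in fact there exists a nonnegative f ∈ L^p(w) with ‖T_S f‖_{L^p(w)} = ∞. -/

import Mathlib

open MeasureTheory Set ENNReal

noncomputable section

/-- The half-open axis-parallel cube with corner `a` and side length `l`. -/
def Cube (n : ℕ) (a : Fin n → ℝ) (l : ℝ) : Set (Fin n → ℝ) :=
  Set.univ.pi fun i => Set.Ico (a i) (a i + l)

/-- The uncentered Hardy–Littlewood maximal function over axis-parallel cubes: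
`Mg(x) = sup_{Q ∋ x} |Q|⁻¹ ∫_Q g`. -/
def MaxFn {n : ℕ} (g : (Fin n → ℝ) → ℝ≥0∞) (x : Fin n → ℝ) : ℝ≥0∞ :=
  ⨆ (a : Fin n → ℝ) (l : ℝ) (_ : 0 < l) (_ : x ∈ Cube n a l),
    (volume (Cube n a l))⁻¹ * ∫⁻ y in Cube n a l, g y

/-- The cube of the sparse family `S` with parameters `k, N`:
`[0, 2^{-N})^n` for `k = 0` and `[2^k, 2^k + 2^{-N})^n` for `k ≥ 1`. -/
def sCube (n k N : ℕ) : Set (Fin n → ℝ) :=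
  Cube n (fun _ => if k = 0 then 0 else (2:ℝ)^k) ((2:ℝ)^(-(N:ℤ)))

/-- The sparse operator `T_S g = Σ_{Q ∈ S} (|Q|⁻¹ ∫_Q g) 1_Q`. -/
def TS {n : ℕ} (g : (Fin n → ℝ) → ℝ≥0∞) (x : Fin n → ℝ) : ℝ≥0∞ :=
  ∑' q : ℕ × ℕ,
    (sCube n q.1 q.2).indicator
      (fun _ => (volume (sCube n q.1 q.2))⁻¹ * ∫⁻ y in sCube n q.1 q.2, g y) x

/-- The `j`-th digit (for `j ≥ 1`) of `t ∈ [0,1)` in base `2^k`, using the expansion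
which is not eventually constant `2^k - 1`. -/
def digit (k j : ℕ) (t : ℝ) : ℤ := ⌊t * 2^(k*j)⌋ % 2^k

/-- `Ω_m(k) ⊆ [0,1)^n`: the points all of whose coordinates have base-`2^k` digits
in `{0, …, 2^{k-1}-1}` for `1 ≤ j ≤ m-1`, with `m`-th digit equal to `2^{k-1}`. -/
def Omega (n k m : ℕ) : Set (Fin n → ℝ) :=
  {x | (∀ i, x i ∈ Set.Ico (0:ℝ) 1) ∧
    ∀ i, (∀ j, 1 ≤ j → j < m → digit k j (x i) < 2^(k-1)) ∧
      digit k m (x i) = 2^(k-1)}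

/-- The weight `w_k = Σ_{m ≥ 1} (2^{kn}/(2^{(k-1)n}+1))^m 1_{Ω_m(k)}`. -/
def wk (n k : ℕ) : (Fin n → ℝ) → ℝ≥0∞ := fun x =>
  ∑' m : ℕ,
    (Omega n k (m+1)).indicator
      (fun _ => ((2:ℝ≥0∞)^(k*n) / ((2:ℝ≥0∞)^((k-1)*n) + 1))^(m+1)) x

/-- `Q_1^m(k) = [2^{-k(m-1)-1}, 2^{-k(m-1)-1} + 2^{-km})^n`. -/
def Q1 (n k m : ℕ) : Set (Fin n → ℝ) :=
  Cube n (fun _ => (2:ℝ)^(-(k*(m-1) : ℤ) - 1)) ((2:ℝ)^(-(k*m : ℤ)))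

/-- `Γ(k) = ⋃_{m ≥ 3} Q_1^m(k)`. -/
def Gamma (n k : ℕ) : Set (Fin n → ℝ) := ⋃ m : ℕ, Q1 n k (m+3)

/-- `A_k = 2^{(k-1)n} (2^{(k-1)n}+1)^2`. -/
def Ak (n k : ℕ) : ℝ≥0∞ := 2^((k-1)*n) * (2^((k-1)*n) + 1)^2

/-- The weight `w(x) = Σ_{k ≥ 3} A_k w_k(x - 2⃗^k) 1_{Γ(k)}(x - 2⃗^k)`. -/
def bigW (n : ℕ) : (Fin n → ℝ) → ℝ≥0∞ := fun x =>
  ∑' k : ℕ,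
    (Gamma n (k+3)).indicator (fun z => Ak n (k+3) * wk n (k+3) z)
      (fun i => x i - (2:ℝ)^(k+3))

/-- The test function `f(x) = Σ_{k ≥ 3} k^{-ε} A_k w_k(x - 2⃗^k)`. -/
def bigF (n : ℕ) (ε : ℝ) : (Fin n → ℝ) → ℝ≥0∞ := fun x =>
  ∑' k : ℕ,
    ((k+3 : ℝ≥0∞) ^ (-ε)) * Ak n (k+3) * wk n (k+3) (fun i => x i - (2:ℝ)^(k+3))

/-- `T` is bounded from `L^p(v)` to `L^p(u)` (for nonnegative functions, which are
required to be supported in `supp v`): there is a finite constant `C` with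
`‖Tf‖_{L^p(u)} ≤ C ‖f‖_{L^p(v)}` for all `f ∈ L^p(v)`. -/
def BddOn {n : ℕ} (T : ((Fin n → ℝ) → ℝ≥0∞) → (Fin n → ℝ) → ℝ≥0∞)
    (p : ℝ) (v u : (Fin n → ℝ) → ℝ≥0∞) : Prop :=
  ∃ C : ℝ≥0∞, C ≠ ∞ ∧ ∀ f : (Fin n → ℝ) → ℝ≥0∞, Measurable f →
    (∀ x, v x = 0 → f x = 0) → (∫⁻ x, f x ^ p * v x) < ∞ →
    ∫⁻ x, T f x ^ p * u x ≤ C ^ p * ∫⁻ x, f x ^ p * v x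

/-- The dual weight `u^{1-p'} 1_{supp u}`. -/
def dualW {n : ℕ} (u : (Fin n → ℝ) → ℝ≥0∞) (q : ℝ) : (Fin n → ℝ) → ℝ≥0∞ :=
  fun x => if u x = 0 then 0 else u x ^ (1 - q)

/-!
Let `Q i = [0, 4⁻ⁱ)ⁿ`, a cube of the sparse family, and let `w` spread the mass
`1 / ((i + 1) (i + 2))` evenly over a cube `E i` in the far half of `Q i`, where `E i` has density
comparable to `(i + 2) ^ (-1 / p)` in `Q i`.

On `E j` the maximal function of `f` is controlled by that of `f` restricted to `E j` together with
the *largest* of the averages of `f` over `Q 0, …, Q j`. The supremum is dominated by the `ℓᵖ` sum,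
and the tail masses `w (E m ∪ E (m + 1) ∪ ⋯) = 1 / (m + 1)` are exactly what Hölder's inequality on
the blocks of density `(i + 2) ^ (-1 / p)` can pay for.

The sparse operator *adds* these averages instead. If `f` has average `(i + 1) ^ (1 / p - 1)` over
`Q i`, coming from `E i` alone, they sum to at least `(j + 1) ^ (1 / p)` on `E j`, so the `p`-th
power integrates to the harmonic series, whereas the norm of `f` is governed by `∑ (i + 1) ^ (-p)`.
-/

section LayerCake

lemma rpow_eq_mul_setLIntegral_rpow_sub_one {q : ℝ} (hq : 0 < q) (y : ℝ≥0∞) :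
    y ^ q = .ofReal q * ∫⁻ t in Ioi 0 ∩ {t | .ofReal t < y}, .ofReal (t ^ (q - 1)) := by
  induction y with
  | top =>
    have h_integral : ∫⁻ t in Ioi (0 : ℝ), ENNReal.ofReal (t ^ (q - 1)) = ∞ := by
      by_contra h_ne
      refine not_integrableOn_Ioi_rpow (q - 1)
        ((lintegral_ofReal_ne_top_iff_integrable (by fun_prop) ?_).1 h_ne)
      filter_upwards [ae_restrict_mem measurableSet_Ioi] with t ht
      exact Real.rpow_nonneg (le_of_lt ht) _
    simp [h_integral, hq, ENNReal.mul_top]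
  | coe y =>
    have h_set : Ioi (0 : ℝ) ∩ {t | ENNReal.ofReal t < y} = Ioo 0 (y : ℝ) := by
      ext t
      refine and_congr_right fun ht : 0 < t => ?_
      rw [mem_ofPred_eq, ← ENNReal.ofReal_coe_nnreal, ENNReal.ofReal_lt_ofReal_iff_of_nonneg ht.le]
    have h_int : IntegrableOn (fun t : ℝ => t ^ (q - 1)) (Ioc 0 y) :=
      (intervalIntegrable_iff_integrableOn_Ioc_of_le (by positivity)).1
        (intervalIntegral.intervalIntegrable_rpow' (by linarith))
    have hy : (0 : ℝ) ≤ y := y.2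
    rw [h_set, setLIntegral_congr Ioo_ae_eq_Ioc, ← ofReal_integral_eq_lintegral_ofReal h_int,
      ← intervalIntegral.integral_of_le hy, integral_rpow (.inl (by linarith)),
      ← ENNReal.ofReal_mul hq.le, ← ENNReal.ofReal_coe_nnreal,
      ENNReal.ofReal_rpow_of_nonneg hy hq.le, sub_add_cancel, Real.zero_rpow hq.ne', sub_zero,
      mul_div_cancel₀ _ hq.ne']
    filter_upwards [ae_restrict_mem measurableSet_Ioc] with t ht
    exact Real.rpow_nonneg ht.1.le _

variable {α : Type*} [MeasurableSpace α] {μ : Measure α} [SFinite μ] {f g F : α → ℝ≥0∞}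

lemma lintegral_mul_rpow_eq_lintegral_setLIntegral_lt {q : ℝ} (hq : 0 < q)
    (hf : Measurable f) (hg : Measurable g) :
    ∫⁻ x, f x * g x ^ q ∂μ = .ofReal q *
      ∫⁻ t in Ioi (0 : ℝ), .ofReal (t ^ (q - 1)) * ∫⁻ x in {x | .ofReal t < g x}, f x ∂μ := by
  let H (x : α) (t : ℝ) : ℝ≥0∞ :=
    {z : α × ℝ | .ofReal z.2 < g z.1}.indicator (fun z => f z.1 * .ofReal (z.2 ^ (q - 1))) (x, t)
  have hH : Measurable (Function.uncurry H) :=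
    Measurable.indicator (by fun_prop) (measurableSet_lt (by fun_prop) (by fun_prop))
  have h_sections (x : α) :
      f x * g x ^ q = .ofReal q * ∫⁻ t in Ioi (0 : ℝ), H x t := by
    have h_meas : MeasurableSet {t | ENNReal.ofReal t < g x} :=
      measurableSet_lt (by fun_prop) (by fun_prop)
    rw [rpow_eq_mul_setLIntegral_rpow_sub_one hq, inter_comm, ← Measure.restrict_restrict h_meas,
      ← lintegral_indicator h_meas, mul_left_comm, ← lintegral_const_mul _
        (Measurable.indicator (by fun_prop) h_meas)]
    simp only [H, indicator_apply, mem_ofPred_eq, mul_ite, mul_zero]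
  have h_levels (t : ℝ) :
      ∫⁻ x, H x t ∂μ = .ofReal (t ^ (q - 1)) * ∫⁻ x in {x | .ofReal t < g x}, f x ∂μ := by
    have h_meas : MeasurableSet {x | ENNReal.ofReal t < g x} := measurableSet_lt (by fun_prop) hg
    rw [← lintegral_indicator h_meas, ← lintegral_const_mul _ (hf.indicator h_meas)]
    simp only [H, indicator_apply, mem_ofPred_eq, mul_ite, mul_zero, mul_comm (f _)]
  simp_rw [h_sections, ← h_levels]
  rw [lintegral_const_mul' _ _ ENNReal.ofReal_ne_top, lintegral_lintegral_swap hH.aemeasurable]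

theorem lintegral_rpow_le_of_mul_meas_lt_le {p : ℝ} (hp : 1 < p) {A : ℝ≥0∞} (hA : A ≠ ∞)
    (hF : Measurable F) (hf : Measurable f) (hg : Measurable g)
    (h_weak : ∀ t : ℝ, 0 < t →
      .ofReal t * μ {x | .ofReal t < F x} ≤ A * ∫⁻ x in {x | .ofReal t < g x}, f x ∂μ) :
    ∫⁻ x, F x ^ p ∂μ ≤ .ofReal (p / (p - 1)) * A * ∫⁻ x, f x * g x ^ (p - 1) ∂μ := by
  have hp₁ : 0 < p - 1 := by linarith
  calc ∫⁻ x, F x ^ p ∂μ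
      = .ofReal p * ∫⁻ t in Ioi (0 : ℝ), .ofReal (t ^ (p - 1)) * μ {x | .ofReal t < F x} := by
        simpa using lintegral_mul_rpow_eq_lintegral_setLIntegral_lt (by linarith : 0 < p)
          measurable_one hF
    _ ≤ .ofReal p * ∫⁻ t in Ioi (0 : ℝ), A *
          (.ofReal (t ^ (p - 1 - 1)) * ∫⁻ x in {x | .ofReal t < g x}, f x ∂μ) := by
        gcongr 1
        refine setLIntegral_mono' measurableSet_Ioi fun t (ht : 0 < t) => ?_
        have h_split : ENNReal.ofReal (t ^ (p - 1)) = .ofReal (t ^ (p - 1 - 1)) * .ofReal t := by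
          rw [← ENNReal.ofReal_mul (by positivity), Real.rpow_sub_one ht.ne' (p - 1),
            div_mul_cancel₀ _ ht.ne']
        rw [h_split, mul_assoc, mul_left_comm A]
        exact mul_le_mul_right (h_weak t ht) _
    _ = .ofReal (p / (p - 1)) * A * ∫⁻ x, f x * g x ^ (p - 1) ∂μ := by
        have h_const : ENNReal.ofReal p = .ofReal (p / (p - 1)) * .ofReal (p - 1) := by
          rw [← ENNReal.ofReal_mul (by positivity), div_mul_cancel₀ p hp₁.ne']
        rw [lintegral_const_mul' _ _ hA, h_const,
          lintegral_mul_rpow_eq_lintegral_setLIntegral_lt hp₁ hf hg]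
        ring

end LayerCake

section HardyLittlewood

variable {X : Type*} [PseudoMetricSpace X] [MeasurableSpace X]

/-- The uncentered Hardy–Littlewood maximal function of `g` with respect to the measure `μ`, over
the open balls of a metric space. -/
def ballMaxFn (μ : Measure X) (g : X → ℝ≥0∞) (x : X) : ℝ≥0∞ :=
  ⨆ (c : X) (r : ℝ) (_ : x ∈ Metric.ball c r), ⨍⁻ y in Metric.ball c r, g y ∂μ

variable {μ : Measure X} {f g h : X → ℝ≥0∞}

lemma setLAverage_ball_le_ballMaxFn {x c : X} {r : ℝ} (hx : x ∈ Metric.ball c r) :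
    ⨍⁻ y in Metric.ball c r, g y ∂μ ≤ ballMaxFn μ g x :=
  le_iSup₂_of_le c r (le_iSup_of_le hx le_rfl)

lemma lt_ballMaxFn_iff {x : X} {t : ℝ≥0∞} :
    t < ballMaxFn μ g x ↔
      ∃ c r, x ∈ Metric.ball c r ∧ t < ⨍⁻ y in Metric.ball c r, g y ∂μ := by
  simp only [ballMaxFn, lt_iSup_iff, exists_prop]

lemma measurable_ballMaxFn [OpensMeasurableSpace X] : Measurable (ballMaxFn μ g) := by
  refine measurable_of_Ioi fun t => IsOpen.measurableSet ?_
  refine isOpen_iff_mem_nhds.2 fun x hx => ?_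
  obtain ⟨c, r, hxc, ht⟩ := lt_ballMaxFn_iff.1 hx
  filter_upwards [Metric.isOpen_ball.mem_nhds hxc] with y hy
  exact lt_ballMaxFn_iff.2 ⟨c, r, hy, ht⟩

lemma ballMaxFn_le_add_const {s : ℝ≥0∞} (hfh : ∀ x, f x ≤ h x + s) (x : X) :
    ballMaxFn μ f x ≤ ballMaxFn μ h x + s := by
  refine iSup₂_le fun c r => iSup_le fun hx => ?_
  calc ⨍⁻ y in Metric.ball c r, f y ∂μ
      ≤ ⨍⁻ y in Metric.ball c r, (h y + s) ∂μ := lintegral_mono hfh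
    _ = (⨍⁻ y in Metric.ball c r, h y ∂μ) + ⨍⁻ _ in Metric.ball c r, s ∂μ :=
        lintegral_add_right _ measurable_const
    _ ≤ ballMaxFn μ h x + s := by
        gcongr
        · exact setLAverage_ball_le_ballMaxFn hx
        · rw [setLAverage_eq, setLIntegral_const, mul_div_assoc]
          exact mul_le_of_le_one_right' ENNReal.div_self_le_one

variable [OpensMeasurableSpace X] [SecondCountableTopology X] {D : ℝ≥0∞}

lemma mul_measure_biUnion_ball_le (hD : ∀ x r, μ (Metric.ball x (5 * r)) ≤ D * μ (Metric.ball x r))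
    {ι : Type*} (s : Set ι) (c : ι → X) (r : ι → ℝ) {R : ℝ} {t : ℝ≥0∞}
    (hr : ∀ i ∈ s, 0 < r i) (hR : ∀ i ∈ s, r i ≤ R)
    (ht : ∀ i ∈ s, t * μ (Metric.ball (c i) (r i)) ≤ ∫⁻ y in Metric.ball (c i) (r i), g y ∂μ) :
    t * μ (⋃ i ∈ s, Metric.ball (c i) (r i)) ≤ D * ∫⁻ y, g y ∂μ := by
  obtain ⟨u, hus, hu_disj, hu_cover⟩ :=
    Vitali.exists_disjoint_subfamily_covering_enlargement_ball s c r R hR 5 (by norm_num)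
  have hu_countable : u.Countable := hu_disj.countable_of_isOpen
    (fun _ _ => Metric.isOpen_ball) fun i hi => Metric.nonempty_ball.2 (hr i (hus hi))
  calc t * μ (⋃ i ∈ s, Metric.ball (c i) (r i))
      ≤ t * μ (⋃ i ∈ u, Metric.ball (c i) (5 * r i)) := by
        gcongr t * μ ?_
        refine iUnion₂_subset fun i hi => ?_
        obtain ⟨j, hj, hij⟩ := hu_cover i hi
        exact hij.trans (subset_biUnion_of_mem (u := fun i => Metric.ball (c i) (5 * r i)) hj)
    _ ≤ t * ∑' i : u, D * μ (Metric.ball (c i) (r i)) := by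
        gcongr t * ?_
        exact (measure_biUnion_le μ hu_countable _).trans (ENNReal.tsum_le_tsum fun i => hD _ _)
    _ = D * ∑' i : u, t * μ (Metric.ball (c i) (r i)) := by
        rw [ENNReal.tsum_mul_left, ENNReal.tsum_mul_left, mul_left_comm]
    _ ≤ D * ∑' i : u, ∫⁻ y in Metric.ball (c i) (r i), g y ∂μ := by
        gcongr with i
        exact ht i (hus i.2)
    _ = D * ∫⁻ y in ⋃ i ∈ u, Metric.ball (c i) (r i), g y ∂μ := by
        rw [lintegral_biUnion hu_countable (fun _ _ => measurableSet_ball) hu_disj]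
    _ ≤ D * ∫⁻ y, g y ∂μ := by
        gcongr D * ?_
        exact setLIntegral_le_lintegral _ _

theorem mul_meas_lt_ballMaxFn_le
    (hD : ∀ x r, μ (Metric.ball x (5 * r)) ≤ D * μ (Metric.ball x r)) (t : ℝ≥0∞) :
    t * μ {x | t < ballMaxFn μ g x} ≤ D * ∫⁻ y, g y ∂μ := by
  let s (N : ℕ) : Set (X × ℝ) :=
    {b | 0 < b.2 ∧ b.2 ≤ N ∧ t < ⨍⁻ y in Metric.ball b.1 b.2, g y ∂μ}
  have h_level : {x | t < ballMaxFn μ g x} = ⋃ N, ⋃ b ∈ s N, Metric.ball b.1 b.2 := by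
    ext x
    simp only [mem_ofPred_eq, lt_ballMaxFn_iff, mem_iUnion, s, Prod.exists, exists_prop]
    constructor
    · rintro ⟨c, r, hx, ht⟩
      obtain ⟨N, hN⟩ := exists_nat_ge r
      exact ⟨N, c, r, ⟨Metric.pos_of_mem_ball hx, hN, ht⟩, hx⟩
    · rintro ⟨N, c, r, ⟨-, -, ht⟩, hx⟩
      exact ⟨c, r, hx, ht⟩
  have h_mono : Monotone fun N => ⋃ b ∈ s N, Metric.ball b.1 b.2 := fun M N hMN =>
    biUnion_subset_biUnion_left fun b hb => ⟨hb.1, hb.2.1.trans (by exact_mod_cast hMN), hb.2.2⟩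
  rw [h_level, h_mono.measure_iUnion, ENNReal.mul_iSup]
  refine iSup_le fun N => mul_measure_biUnion_ball_le hD (s N) Prod.fst Prod.snd
    (fun b hb => hb.1) (fun b hb => hb.2.1) fun b hb => ?_
  have h_avg := hb.2.2.le
  rw [setLAverage_eq] at h_avg
  exact ENNReal.mul_le_of_le_div h_avg

-- Truncating `f` below `t / 2` costs at most `t / 2` in the maximal function.
lemma mul_meas_lt_ballMaxFn_le_setLIntegral
    (hD : ∀ x r, μ (Metric.ball x (5 * r)) ≤ D * μ (Metric.ball x r)) (hf : Measurable f)
    (t : ℝ≥0∞) :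
    t * μ {x | t < ballMaxFn μ f x} ≤ 2 * D * ∫⁻ x in {x | t < 2 * f x}, f x ∂μ := by
  set h := {x | t < 2 * f x}.indicator f
  have h_trunc (x : X) : f x ≤ h x + t / 2 := by
    by_cases hx : t < 2 * f x
    · simp [h, hx]
    · refine le_add_of_nonneg_of_le zero_le (ENNReal.le_div_iff_mul_le (by simp) (by simp) |>.2 ?_)
      rw [mul_comm]
      exact not_lt.1 hx
  have h_level : {x | t < ballMaxFn μ f x} ⊆ {x | t / 2 < ballMaxFn μ h x} := fun x hx => by
    refine lt_of_add_lt_add_right (a := t / 2) ?_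
    rw [ENNReal.add_halves]
    exact lt_of_lt_of_le hx (ballMaxFn_le_add_const h_trunc x)
  calc t * μ {x | t < ballMaxFn μ f x}
      ≤ t * μ {x | t / 2 < ballMaxFn μ h x} := by gcongr t * ?_; exact measure_mono h_level
    _ = 2 * (t / 2 * μ {x | t / 2 < ballMaxFn μ h x}) := by
        rw [← mul_assoc, ENNReal.mul_div_cancel two_ne_zero ofNat_ne_top]
    _ ≤ 2 * (D * ∫⁻ x, h x ∂μ) := by gcongr 2 * ?_; exact mul_meas_lt_ballMaxFn_le hD _
    _ = 2 * D * ∫⁻ x in {x | t < 2 * f x}, f x ∂μ := by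
        rw [lintegral_indicator (measurableSet_lt measurable_const (hf.const_mul 2)), mul_assoc]

theorem lintegral_ballMaxFn_rpow_le [SFinite μ] (hD_top : D ≠ ∞)
    (hD : ∀ x r, μ (Metric.ball x (5 * r)) ≤ D * μ (Metric.ball x r)) {p : ℝ} (hp : 1 < p)
    (hf : Measurable f) :
    ∫⁻ x, ballMaxFn μ f x ^ p ∂μ ≤
      .ofReal (p / (p - 1)) * (2 * D) * 2 ^ (p - 1) * ∫⁻ x, f x ^ p ∂μ := by
  have h_pow (x : X) : f x * (2 * f x) ^ (p - 1) = 2 ^ (p - 1) * f x ^ p := by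
    rw [ENNReal.mul_rpow_of_nonneg _ _ (by linarith), mul_left_comm]
    nth_rw 1 [← ENNReal.rpow_one (f x)]
    rw [← ENNReal.rpow_add_of_nonneg _ _ zero_le_one (by linarith), add_sub_cancel]
  refine (lintegral_rpow_le_of_mul_meas_lt_le hp (by finiteness) measurable_ballMaxFn hf
    (hf.const_mul 2) fun t _ => mul_meas_lt_ballMaxFn_le_setLIntegral hD hf _).trans_eq ?_
  simp_rw [h_pow]
  rw [lintegral_const_mul _ (hf.pow_const p), ← mul_assoc]

end HardyLittlewood

section Series

theorem lintegral_rpow_le_measure_univ_rpow_mul_lintegral_rpow {α : Type*} [MeasurableSpace α]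
    {μ : Measure α} {p : ℝ} (hp : 1 ≤ p) {f : α → ℝ≥0∞} (hf : AEMeasurable f μ) :
    (∫⁻ x, f x ∂μ) ^ p ≤ μ univ ^ (p - 1) * ∫⁻ x, f x ^ p ∂μ := by
  have hp₀ : p ≠ 0 := by linarith
  have h_norm := eLpNorm'_le_eLpNorm'_mul_rpow_measure_univ one_pos hp hf.aestronglyMeasurable
  simp only [eLpNorm'_eq_lintegral_enorm, enorm_eq_self, ENNReal.rpow_one, div_one] at h_norm
  calc (∫⁻ x, f x ∂μ) ^ p
      ≤ ((∫⁻ x, f x ^ p ∂μ) ^ (1 / p) * μ univ ^ (1 - 1 / p)) ^ p := by gcongr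
    _ = μ univ ^ (p - 1) * ∫⁻ x, f x ^ p ∂μ := by
        rw [ENNReal.mul_rpow_of_nonneg _ _ (by linarith), ← ENNReal.rpow_mul, ← ENNReal.rpow_mul,
          one_div_mul_cancel hp₀, ENNReal.rpow_one, sub_mul, one_div_mul_cancel hp₀, one_mul,
          mul_comm]

lemma tsum_mul_rpow_le_tsum_rpow_mul_tsum {ι : Type*} {p : ℝ} (hp : 1 ≤ p) (c a : ι → ℝ≥0∞) :
    (∑' i, c i * a i) ^ p ≤ (∑' i, c i) ^ (p - 1) * ∑' i, c i * a i ^ p := by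
  let : MeasurableSpace ι := ⊤
  simpa using lintegral_rpow_le_measure_univ_rpow_mul_lintegral_rpow hp
    (μ := Measure.sum fun i => c i • Measure.dirac i) (Measurable.of_discrete (f := a)).aemeasurable

lemma tsum_mul_rpow_tsum_shift_le {p : ℝ} (hp : 1 ≤ p) {c e U : ℕ → ℝ≥0∞}
    (hU : ∀ m k, c k * U m ≤ e k * U (m + k)) (a : ℕ → ℝ≥0∞) :
    ∑' m, U m * (∑' k, c k * a (m + k)) ^ p ≤
      (∑' k, c k) ^ (p - 1) * (∑' k, e k) * ∑' i, U i * a i ^ p := by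
  calc ∑' m, U m * (∑' k, c k * a (m + k)) ^ p
      ≤ ∑' m, U m * ((∑' k, c k) ^ (p - 1) * ∑' k, c k * a (m + k) ^ p) := by
        gcongr; exact tsum_mul_rpow_le_tsum_rpow_mul_tsum hp _ _
    _ = (∑' k, c k) ^ (p - 1) * ∑' m, ∑' k, c k * U m * a (m + k) ^ p := by
        simp_rw [mul_left_comm (U _), ENNReal.tsum_mul_left, ← ENNReal.tsum_mul_left (a := U _),
          ← mul_assoc, mul_comm (U _)]
    _ ≤ (∑' k, c k) ^ (p - 1) * ∑' m, ∑' k, e k * U (m + k) * a (m + k) ^ p := by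
        gcongr _ * ∑' m, ∑' k, ?_ * _ with m k
        exact hU m k
    _ = (∑' k, c k) ^ (p - 1) * ∑' k, e k * ∑' m, U (m + k) * a (m + k) ^ p := by
        rw [ENNReal.tsum_comm]
        simp_rw [mul_assoc, ENNReal.tsum_mul_left]
    _ ≤ (∑' k, c k) ^ (p - 1) * ∑' k, e k * ∑' i, U i * a i ^ p := by
        gcongr _ * ∑' k, _ * ?_ with k
        exact ENNReal.tsum_comp_le_tsum_of_injective (add_left_injective k)
          fun i => U i * a i ^ p
    _ = (∑' k, c k) ^ (p - 1) * (∑' k, e k) * ∑' i, U i * a i ^ p := by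
        rw [ENNReal.tsum_mul_right, mul_assoc]

lemma tsum_mul_sum_range_succ (W h : ℕ → ℝ≥0∞) :
    ∑' j, W j * ∑ m ∈ Finset.range (j + 1), h m = ∑' m, (∑' k, W (m + k)) * h m := by
  simp_rw [← ENNReal.tsum_mul_right]
  rw [← ENNReal.tsum_prod, ← Finset.HasAntidiagonal.sigmaAntidiagonalEquivProd.tsum_eq,
    ENNReal.tsum_sigma']
  congr! 2 with j
  calc W j * ∑ m ∈ Finset.range (j + 1), h m
      = ∑ x ∈ Finset.HasAntidiagonal.antidiagonal j, W (x.1 + x.2) * h x.1 := by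
        rw [Finset.Nat.sum_antidiagonal_eq_sum_range_succ_mk, Finset.mul_sum]
        refine Finset.sum_congr rfl fun m hm => ?_
        rw [Nat.add_sub_cancel' (Finset.mem_range_succ_iff.1 hm)]
    _ = _ := (Finset.tsum_subtype _ fun x : ℕ × ℕ => W (x.1 + x.2) * h x.1).symm

lemma tsum_shift_le_of_add_eq {W U : ℕ → ℝ≥0∞} (h : ∀ i, W i + U (i + 1) = U i) (m : ℕ) :
    ∑' k, W (m + k) ≤ U m := by
  have h_telescope (N : ℕ) : ∑ k ∈ Finset.range N, W (m + k) + U (m + N) = U m := by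
    induction N with
    | zero => simp
    | succ N ih => rw [Finset.sum_range_succ, add_assoc, ← add_assoc m, h, ih]
  exact ENNReal.tsum_le_of_sum_range_le fun N => le_self_add.trans_eq (h_telescope N)

end Series

section Blocks

variable {α ι : Type*} {E : ι → Set α} {c : ι → ℝ≥0∞} {F : α → ℝ≥0∞} {x : α}

/-- The step function `∑ i, c i · 1_{E i}`; on pairwise disjoint blocks it takes the value `c i` on
`E i`. -/
def blockFun (E : ι → Set α) (c : ι → ℝ≥0∞) (x : α) : ℝ≥0∞ :=
  ∑' i, (E i).indicator (fun _ => c i) x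

lemma blockFun_eq_of_mem (h_disj : Pairwise (Function.onFun Disjoint E)) {i : ι} (hx : x ∈ E i) :
    blockFun E c x = c i := by
  rw [blockFun, tsum_eq_single i fun j hj => indicator_of_notMem
    (disjoint_left.1 (h_disj hj.symm) hx) _, indicator_of_mem hx]

lemma exists_mem_of_blockFun_ne_zero (hx : blockFun E c x ≠ 0) : ∃ i, x ∈ E i := by
  contrapose! hx
  simp [blockFun, hx]

lemma blockFun_eq_zero_of_blockFun_eq_zero {d : ι → ℝ≥0∞} (hc : ∀ i, c i ≠ 0)
    (hx : blockFun E c x = 0) : blockFun E d x = 0 := by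
  simp_all [blockFun]

lemma mul_blockFun : F x * blockFun E c x = ∑' i, (E i).indicator (fun y => c i * F y) x := by
  rw [blockFun, ← ENNReal.tsum_mul_left]
  congr! 2 with i
  by_cases hx : x ∈ E i <;> simp [hx, mul_comm]

variable [MeasurableSpace α] [Countable ι] (hE : ∀ i, MeasurableSet (E i))
include hE

lemma measurable_blockFun : Measurable (blockFun E c) :=
  .tsum fun i => measurable_const.indicator (hE i)

variable {μ : Measure α}

lemma lintegral_mul_blockFun (hF : Measurable F) :
    ∫⁻ x, F x * blockFun E c x ∂μ = ∑' i, c i * ∫⁻ x in E i, F x ∂μ := by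
  simp_rw [mul_blockFun]
  rw [lintegral_tsum fun i => ((hF.const_mul _).indicator (hE i)).aemeasurable]
  simp_rw [lintegral_indicator (hE _), lintegral_const_mul _ hF]

lemma lintegral_mul_blockFun_le {G : ι → α → ℝ≥0∞} (hG : ∀ i, Measurable (G i))
    (hFG : ∀ i, ∀ x ∈ E i, F x ≤ G i x) :
    ∫⁻ x, F x * blockFun E c x ∂μ ≤ ∑' i, c i * ∫⁻ x in E i, G i x ∂μ := by
  calc ∫⁻ x, F x * blockFun E c x ∂μ
      ≤ ∫⁻ x, ∑' i, (E i).indicator (fun y => c i * G i y) x ∂μ := by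
        simp_rw [mul_blockFun]
        refine lintegral_mono fun x => ENNReal.tsum_le_tsum fun i =>
          indicator_le_indicator' fun hx => ?_
        gcongr
        exact hFG i x hx
    _ = ∑' i, c i * ∫⁻ x in E i, G i x ∂μ := by
        rw [lintegral_tsum fun i => (((hG i).const_mul _).indicator (hE i)).aemeasurable]
        simp_rw [lintegral_indicator (hE _), lintegral_const_mul _ (hG _)]

lemma le_lintegral_mul_blockFun {a : ι → ℝ≥0∞} (haF : ∀ i, ∀ x ∈ E i, a i ≤ F x) :
    ∑' i, c i * (a i * μ (E i)) ≤ ∫⁻ x, F x * blockFun E c x ∂μ := by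
  calc ∑' i, c i * (a i * μ (E i))
      = ∫⁻ x, ∑' i, (E i).indicator (fun _ => c i * a i) x ∂μ := by
        rw [lintegral_tsum fun i => (measurable_const.indicator (hE i)).aemeasurable]
        simp_rw [lintegral_indicator (hE _), setLIntegral_const, mul_assoc]
    _ ≤ ∫⁻ x, F x * blockFun E c x ∂μ := by
        simp_rw [mul_blockFun]
        refine lintegral_mono fun x => ENNReal.tsum_le_tsum fun i =>
          indicator_le_indicator' fun hx => ?_
        gcongr
        exact haF i x hx

end Blocks

section BlockWeights

/-- The weight that is constant on each block `E i` and gives it the mass `W i`. -/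
def blockWeight {α : Type*} [MeasureSpace α] (E : ℕ → Set α) (W : ℕ → ℝ≥0∞) : α → ℝ≥0∞ :=
  blockFun E fun i => W i / volume (E i)

variable {α : Type*} [MeasureSpace α] {E : ℕ → Set α} {F : α → ℝ≥0∞} {c W : ℕ → ℝ≥0∞} {p : ℝ}

lemma lintegral_blockFun_rpow_mul_blockWeight_le (hE : ∀ i, MeasurableSet (E i))
    (h_disj : Pairwise (Function.onFun Disjoint E)) :
    ∫⁻ x, blockFun E c x ^ p * blockWeight E W x ≤ ∑' i, c i ^ p * W i := by
  refine (lintegral_mul_blockFun_le hE (G := fun i _ => c i ^ p) (fun _ => measurable_const)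
    fun i x hx => (blockFun_eq_of_mem h_disj hx ▸ le_rfl)).trans ?_
  refine ENNReal.tsum_le_tsum fun i => ?_
  rw [setLIntegral_const, mul_left_comm, mul_comm (W i / _)]
  gcongr
  exact ENNReal.mul_div_le

lemma tsum_mul_le_lintegral_mul_blockWeight (hE : ∀ i, MeasurableSet (E i))
    (hE₀ : ∀ i, volume (E i) ≠ 0) (hE_top : ∀ i, volume (E i) ≠ ∞)
    (hcF : ∀ i, ∀ x ∈ E i, c i ≤ F x) :
    ∑' i, c i * W i ≤ ∫⁻ x, F x * blockWeight E W x := by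
  refine le_trans (ENNReal.tsum_le_tsum fun i => ?_) (le_lintegral_mul_blockFun hE hcF)
  rw [mul_left_comm, ENNReal.div_mul_cancel (hE₀ i) (hE_top i)]

end BlockWeights

section Boundedness

variable {n : ℕ} {T : ((Fin n → ℝ) → ℝ≥0∞) → (Fin n → ℝ) → ℝ≥0∞} {p : ℝ}
  {u v : (Fin n → ℝ) → ℝ≥0∞}

lemma bddOn_of_lintegral_le (hp : 0 < p) {D : ℝ≥0∞} (hD : D ≠ ∞)
    (h : ∀ f, Measurable f → (∀ x, v x = 0 → f x = 0) →
      ∫⁻ x, T f x ^ p * u x ≤ D * ∫⁻ x, f x ^ p * v x) :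
    BddOn T p v u := by
  refine ⟨D ^ p⁻¹, by finiteness, fun f hf hv _ => ?_⟩
  rw [ENNReal.rpow_inv_rpow hp.ne']
  exact h f hf hv

lemma not_bddOn_of_lintegral_eq_top (hp : 0 ≤ p) {f : (Fin n → ℝ) → ℝ≥0∞} (hf : Measurable f)
    (hfv : ∀ x, v x = 0 → f x = 0) (hf_lt : ∫⁻ x, f x ^ p * v x < ∞)
    (hTf : ∫⁻ x, T f x ^ p * u x = ∞) :
    ¬ BddOn T p v u := by
  rintro ⟨C, hC, hT⟩
  have h_top := hT f hf hfv hf_lt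
  rw [hTf, top_le_iff] at h_top
  exact ENNReal.mul_ne_top (ENNReal.rpow_ne_top_of_nonneg hp hC) hf_lt.ne h_top

end Boundedness

section CubeAverages

variable {n : ℕ} {g : (Fin n → ℝ) → ℝ≥0∞}

lemma measurableSet_Cube (a : Fin n → ℝ) (l : ℝ) : MeasurableSet (Cube n a l) :=
  .univ_pi fun _ => measurableSet_Ico

lemma volume_Cube (a : Fin n → ℝ) (l : ℝ) : volume (Cube n a l) = .ofReal l ^ n := by
  simp [Cube, volume_pi_pi]

lemma Cube_subset_ball (a : Fin n → ℝ) {l : ℝ} (hl : 0 < l) :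
    Cube n a l ⊆ Metric.ball (fun i => a i + l / 2) l := fun x hx => by
  refine (dist_pi_lt_iff hl).2 fun i => ?_
  have hxi := hx i (mem_univ i)
  rw [Real.dist_eq, abs_lt]
  constructor <;> linarith [hxi.1, hxi.2]

lemma volume_ball_five_mul_le (x : Fin n → ℝ) (r : ℝ) :
    volume (Metric.ball x (5 * r)) ≤ 5 ^ n * volume (Metric.ball x r) := by
  rw [Measure.addHaar_ball_mul_of_pos _ _ (by norm_num), Measure.addHaar_ball_center _ x]
  simp

lemma inv_volume_Cube_mul_setLIntegral_le_ballMaxFn {a x : Fin n → ℝ} {l : ℝ} (hl : 0 < l)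
    (hx : x ∈ Cube n a l) :
    (volume (Cube n a l))⁻¹ * ∫⁻ y in Cube n a l, g y ≤ 2 ^ n * ballMaxFn volume g x := by
  set B := Metric.ball (fun i => a i + l / 2) l
  have h_vol : (volume (Cube n a l))⁻¹ = 2 ^ n * (volume B)⁻¹ := by
    rw [volume_Cube, Real.volume_pi_ball _ hl, Fintype.card_fin, mul_pow,
      ENNReal.ofReal_mul (by positivity), ENNReal.ofReal_pow zero_le_two,
      ENNReal.ofReal_pow hl.le, ENNReal.ofReal_ofNat,
      ENNReal.mul_inv (.inl (by simp)) (.inl (by finiteness)), ← mul_assoc,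
      ENNReal.mul_inv_cancel (by simp) (by finiteness), one_mul]
  calc (volume (Cube n a l))⁻¹ * ∫⁻ y in Cube n a l, g y
      ≤ 2 ^ n * (volume B)⁻¹ * ∫⁻ y in B, g y := by
        rw [h_vol]
        gcongr
        exact Cube_subset_ball a hl
    _ = 2 ^ n * ⨍⁻ y in B, g y ∂volume := by rw [setLAverage_eq, ENNReal.div_eq_inv_mul, mul_assoc]
    _ ≤ 2 ^ n * ballMaxFn volume g x := by
        gcongr
        exact setLAverage_ball_le_ballMaxFn (Cube_subset_ball a hl hx)

end CubeAverages

section CornerBlocks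

variable {n : ℕ}

lemma setLIntegral_le_setLIntegral_of_support {α : Type*} [MeasurableSpace α] {μ : Measure α}
    {f : α → ℝ≥0∞} {s t : Set α} (hs : MeasurableSet s) (hst : ∀ x ∈ s, f x ≠ 0 → x ∈ t) :
    ∫⁻ x in s, f x ∂μ ≤ ∫⁻ x in t, f x ∂μ := by
  rw [← lintegral_indicator hs]
  refine (lintegral_mono fun x => ?_).trans (lintegral_indicator_le f t)
  by_cases hx : x ∈ s
  · rw [indicator_of_mem hx]
    by_cases hfx : f x = 0
    · simp [hfx]
    · rw [indicator_of_mem (hst x hx hfx)]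
  · simp [hx]

/-- The far half `[4⁻ⁱ/2, 4⁻ⁱ)ⁿ` of the cube `[0, 4⁻ⁱ)ⁿ` of the sparse family; the far halves for
different `i` are separated. -/
def farHalf (n i : ℕ) : Set (Fin n → ℝ) :=
  Cube n (fun _ => (1 / 4 : ℝ) ^ i / 2) ((1 / 4 : ℝ) ^ i / 2)

lemma sCube_zero_eq (m : ℕ) : sCube n 0 (2 * m) = Cube n 0 ((1 / 4 : ℝ) ^ m) := by
  have h_side : (2 : ℝ) ^ (-((2 * m : ℕ) : ℤ)) = (1 / 4) ^ m := by
    rw [zpow_neg, zpow_natCast, pow_mul, ← inv_pow]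
    norm_num
  simp only [sCube, if_true, h_side]
  rfl

lemma volume_sCube_zero (m : ℕ) : volume (sCube n 0 (2 * m)) = (4 ^ (n * m))⁻¹ := by
  rw [sCube_zero_eq, volume_Cube, ENNReal.ofReal_pow (by norm_num), ← pow_mul, mul_comm m,
    one_div, ENNReal.ofReal_inv_of_pos (by norm_num), ENNReal.ofReal_ofNat, ENNReal.inv_pow]

lemma inv_volume_Cube_le_of_pow_le {m : ℕ} {l : ℝ} (hl : (1 / 4 : ℝ) ^ m ≤ 4 * l)
    (a : Fin n → ℝ) :
    (volume (Cube n a l))⁻¹ ≤ 4 ^ n * (volume (sCube n 0 (2 * m)))⁻¹ := by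
  have h_side : ((4 : ℝ≥0∞) ^ (m + 1))⁻¹ ≤ .ofReal l := by
    have h_quarter : (4 : ℝ≥0∞)⁻¹ = .ofReal (1 / 4) := by
      rw [one_div, ENNReal.ofReal_inv_of_pos (by norm_num), ENNReal.ofReal_ofNat]
    rw [ENNReal.inv_pow, h_quarter, ← ENNReal.ofReal_pow (by norm_num)]
    exact ENNReal.ofReal_le_ofReal (by rw [pow_succ]; linarith)
  calc (volume (Cube n a l))⁻¹
      ≤ (((4 ^ (m + 1))⁻¹ : ℝ≥0∞) ^ n)⁻¹ := by rw [volume_Cube]; gcongr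
    _ = 4 ^ n * (volume (sCube n 0 (2 * m)))⁻¹ := by
        rw [volume_sCube_zero, inv_inv, ENNReal.inv_pow, inv_inv]
        ring

lemma mem_farHalf_iff {i : ℕ} {x : Fin n → ℝ} :
    x ∈ farHalf n i ↔ ∀ k, (1 / 4 : ℝ) ^ i / 2 ≤ x k ∧ x k < (1 / 4) ^ i := by
  simp [farHalf, Cube]

lemma farHalf_subset_sCube {m i : ℕ} (hmi : m ≤ i) : farHalf n i ⊆ sCube n 0 (2 * m) := by
  intro x hx
  have h_anti : (1 / 4 : ℝ) ^ i ≤ (1 / 4) ^ m :=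
    pow_le_pow_of_le_one (by norm_num) (by norm_num) hmi
  rw [sCube_zero_eq]
  intro k _
  have hxk := mem_farHalf_iff.1 hx k
  simp only [Pi.zero_apply, zero_add, mem_Ico]
  exact ⟨le_trans (by positivity) hxk.1, hxk.2.trans_le h_anti⟩

variable [NeZero n]

lemma le_of_mem_farHalf_of_mem_sCube {m i : ℕ} {x : Fin n → ℝ} (hi : x ∈ farHalf n i)
    (hm : x ∈ sCube n 0 (2 * m)) : m ≤ i := by
  by_contra! him
  rw [sCube_zero_eq] at hm
  have h_pow : (1 / 4 : ℝ) ^ m ≤ (1 / 4) ^ (i + 1) :=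
    pow_le_pow_of_le_one (by norm_num) (by norm_num) him
  have h_lower := (mem_farHalf_iff.1 hi 0).1
  have h_upper := (hm 0 (mem_univ 0)).2
  simp only [Pi.zero_apply, zero_add] at h_upper
  have := pow_pos (by norm_num : (0:ℝ) < 1 / 4) i
  rw [pow_succ] at h_pow
  linarith

lemma eq_of_mem_farHalf {i j : ℕ} {x : Fin n → ℝ} (hi : x ∈ farHalf n i) (hj : x ∈ farHalf n j) :
    i = j :=
  le_antisymm (le_of_mem_farHalf_of_mem_sCube hj (farHalf_subset_sCube le_rfl hi))
    (le_of_mem_farHalf_of_mem_sCube hi (farHalf_subset_sCube le_rfl hj))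

lemma pairwise_disjoint_of_subset_farHalf {E : ℕ → Set (Fin n → ℝ)}
    (hE : ∀ i, E i ⊆ farHalf n i) :
    Pairwise (Function.onFun Disjoint E) := fun i j hij =>
  disjoint_left.2 fun _ hi hj => hij (eq_of_mem_farHalf (hE i hi) (hE j hj))

lemma pow_le_four_mul_of_mem_Cube {m i : ℕ} (hmi : m < i) {a y z : Fin n → ℝ} {l : ℝ}
    (hy : y ∈ farHalf n m) (hz : z ∈ farHalf n i) (hyQ : y ∈ Cube n a l) (hzQ : z ∈ Cube n a l) :
    (1 / 4 : ℝ) ^ m ≤ 4 * l := by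
  have h_pow : (1 / 4 : ℝ) ^ i ≤ (1 / 4) ^ (m + 1) :=
    pow_le_pow_of_le_one (by norm_num) (by norm_num) hmi
  rw [pow_succ] at h_pow
  linarith [(mem_farHalf_iff.1 hy 0).1, (mem_farHalf_iff.1 hz 0).2, (hyQ 0 (mem_univ 0)).2,
    (hzQ 0 (mem_univ 0)).1]

end CornerBlocks

section MaximalBound

/-- The average of `f` over the cube `[0, 4⁻ᵐ)ⁿ` of the sparse family. -/
def cornerAvg {n : ℕ} (f : (Fin n → ℝ) → ℝ≥0∞) (m : ℕ) : ℝ≥0∞ :=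
  (volume (sCube n 0 (2 * m)))⁻¹ * ∫⁻ y in sCube n 0 (2 * m), f y

variable {n : ℕ} [NeZero n] {E : ℕ → Set (Fin n → ℝ)} {f : (Fin n → ℝ) → ℝ≥0∞} {p : ℝ}

lemma inv_volume_Cube_mul_setLIntegral_le_cornerAvg
    (hE : ∀ i, E i ⊆ farHalf n i) (hf : ∀ x, f x ≠ 0 → ∃ i, x ∈ E i) {a : Fin n → ℝ} {l : ℝ}
    {m i : ℕ} (hmi : m < i) (hm : (Cube n a l ∩ E m).Nonempty) (hi : (Cube n a l ∩ E i).Nonempty)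
    (h_min : ∀ k, (Cube n a l ∩ E k).Nonempty → m ≤ k) :
    (volume (Cube n a l))⁻¹ * ∫⁻ y in Cube n a l, f y ≤ 4 ^ n * cornerAvg f m := by
  obtain ⟨y, hyQ, hyE⟩ := hm
  obtain ⟨z, hzQ, hzE⟩ := hi
  rw [cornerAvg, ← mul_assoc]
  refine mul_le_mul' (inv_volume_Cube_le_of_pow_le
    (pow_le_four_mul_of_mem_Cube hmi (hE m hyE) (hE i hzE) hyQ hzQ) a) ?_
  refine setLIntegral_le_setLIntegral_of_support (measurableSet_Cube a l) fun x hx hfx => ?_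
  obtain ⟨k, hk⟩ := hf x hfx
  exact farHalf_subset_sCube (h_min k ⟨x, hx, hk⟩) (hE k hk)

-- A cube that meets only one block sees `f` locally. If it meets several, let `m` be the first: the
-- gap between blocks forces the side to be at least `4⁻ᵐ/4`, and what it sees of `f` lies in
-- `[0, 4⁻ᵐ)ⁿ`.
lemma inv_volume_Cube_mul_setLIntegral_le_ballMaxFn_or_cornerAvg
    (hE : ∀ i, E i ⊆ farHalf n i) (hf : ∀ x, f x ≠ 0 → ∃ i, x ∈ E i) {j : ℕ} {a x : Fin n → ℝ}
    {l : ℝ} (hl : 0 < l) (hxE : x ∈ E j) (hxQ : x ∈ Cube n a l) :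
    (volume (Cube n a l))⁻¹ * ∫⁻ y in Cube n a l, f y ≤
        2 ^ n * ballMaxFn volume ((E j).indicator f) x ∨
      ∃ m ≤ j, (volume (Cube n a l))⁻¹ * ∫⁻ y in Cube n a l, f y ≤ 4 ^ n * cornerAvg f m := by
  set Q := Cube n a l
  by_cases h_only : ∀ i, (Q ∩ E i).Nonempty → i = j
  · left
    refine le_trans ?_ (inv_volume_Cube_mul_setLIntegral_le_ballMaxFn hl hxQ)
    gcongr _ * ?_
    refine setLIntegral_mono' (measurableSet_Cube a l) fun y hy => ?_
    by_cases hfy : f y = 0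
    · simp [hfy]
    · obtain ⟨i, hi⟩ := hf y hfy
      obtain rfl := h_only i ⟨y, hy, hi⟩
      rw [indicator_of_mem hi]
  · right
    classical
    have h_meets : ∃ i, (Q ∩ E i).Nonempty := ⟨j, x, hxQ, hxE⟩
    have h_min (k : ℕ) (hk : (Q ∩ E k).Nonempty) : Nat.find h_meets ≤ k := Nat.find_min' _ hk
    have hmj := h_min j ⟨x, hxQ, hxE⟩
    obtain ⟨i, hi, hmi⟩ : ∃ i, (Q ∩ E i).Nonempty ∧ Nat.find h_meets < i := by
      push Not at h_only
      obtain ⟨i, hi, hij⟩ := h_only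
      obtain hmi | hmi := (h_min i hi).lt_or_eq
      · exact ⟨i, hi, hmi⟩
      · exact ⟨j, ⟨x, hxQ, hxE⟩, hmj.lt_of_ne (hmi ▸ hij)⟩
    exact ⟨_, hmj, inv_volume_Cube_mul_setLIntegral_le_cornerAvg hE hf hmi
      (Nat.find_spec h_meets) hi h_min⟩

lemma MaxFn_rpow_le (hp : 0 < p) (hE : ∀ i, E i ⊆ farHalf n i)
    (hf : ∀ x, f x ≠ 0 → ∃ i, x ∈ E i) {j : ℕ} {x : Fin n → ℝ} (hx : x ∈ E j) :
    MaxFn f x ^ p ≤ (2 ^ n * ballMaxFn volume ((E j).indicator f) x) ^ p +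
      ∑ m ∈ Finset.range (j + 1), (4 ^ n * cornerAvg f m) ^ p := by
  rw [← ENNReal.le_rpow_inv_iff hp]
  refine iSup₂_le fun a l => iSup₂_le fun hl hxQ => ?_
  rw [ENNReal.le_rpow_inv_iff hp]
  obtain h_local | ⟨m, hmj, h_corner⟩ :=
    inv_volume_Cube_mul_setLIntegral_le_ballMaxFn_or_cornerAvg hE hf hl hx hxQ
  · exact le_add_right (ENNReal.rpow_le_rpow h_local hp.le)
  · refine le_add_left ((ENNReal.rpow_le_rpow h_corner hp.le).trans ?_)
    exact Finset.single_le_sum (f := fun m => (4 ^ n * cornerAvg f m) ^ p) (fun _ _ => zero_le)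
      (Finset.mem_range_succ_iff.2 hmj)

lemma cornerAvg_le_tsum (hE : ∀ i, E i ⊆ farHalf n i) (hf : ∀ x, f x ≠ 0 → ∃ i, x ∈ E i) (m : ℕ) :
    cornerAvg f m ≤ ∑' k, 4⁻¹ ^ k * (4 ^ (n * (m + k)) * ∫⁻ y in E (m + k), f y) := by
  have h_scale (k : ℕ) : (4 : ℝ≥0∞) ^ (n * m) ≤ 4⁻¹ ^ k * 4 ^ (n * (m + k)) := by
    have hn : 1 ≤ n := NeZero.one_le
    rw [← ENNReal.inv_pow, ← ENNReal.div_eq_inv_mul,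
      ENNReal.le_div_iff_mul_le (by simp) (by simp), ← pow_add]
    exact pow_le_pow_right₀ (by norm_num) (by nlinarith)
  have hQ : MeasurableSet (sCube n 0 (2 * m)) := measurableSet_Cube _ _
  calc cornerAvg f m
      ≤ 4 ^ (n * m) * ∫⁻ y in ⋃ k, E (m + k), f y := by
        rw [cornerAvg, volume_sCube_zero, inv_inv]
        gcongr _ * ?_
        refine setLIntegral_le_setLIntegral_of_support hQ fun y hyQ hfy => ?_
        obtain ⟨i, hi⟩ := hf y hfy
        obtain ⟨k, rfl⟩ := Nat.exists_eq_add_of_le (le_of_mem_farHalf_of_mem_sCube (hE i hi) hyQ)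
        exact mem_iUnion_of_mem k hi
    _ ≤ ∑' k, 4 ^ (n * m) * ∫⁻ y in E (m + k), f y := by
        rw [ENNReal.tsum_mul_left]
        gcongr
        exact lintegral_iUnion_le _ _
    _ ≤ ∑' k, 4⁻¹ ^ k * (4 ^ (n * (m + k)) * ∫⁻ y in E (m + k), f y) := by
        simp_rw [← mul_assoc]
        gcongr with k
        exact h_scale k

lemma mul_setLIntegral_rpow_le {α : Type*} [MeasurableSpace α] {μ : Measure α} (hp : 1 ≤ p)
    {s : Set α} (hs : μ s ≠ 0) (hs_top : μ s ≠ ∞) {f : α → ℝ≥0∞}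
    (hf : AEMeasurable f (μ.restrict s)) {U W q : ℝ≥0∞} (hUW : U * (q * μ s) ^ p ≤ W) :
    U * (q * ∫⁻ x in s, f x ∂μ) ^ p ≤ W / μ s * ∫⁻ x in s, f x ^ p ∂μ := by
  have hp₀ : 0 ≤ p := by linarith
  have h_split : μ s ^ p = μ s ^ (p - 1) * μ s := by
    rw [ENNReal.rpow_sub _ _ hs hs_top, ENNReal.rpow_one, ENNReal.div_mul_cancel hs hs_top]
  calc U * (q * ∫⁻ x in s, f x ∂μ) ^ p
      ≤ U * (q ^ p * (μ s ^ (p - 1) * ∫⁻ x in s, f x ^ p ∂μ)) := by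
        rw [ENNReal.mul_rpow_of_nonneg _ _ hp₀]
        gcongr
        simpa using lintegral_rpow_le_measure_univ_rpow_mul_lintegral_rpow hp hf
    _ = U * q ^ p * μ s ^ (p - 1) * ∫⁻ x in s, f x ^ p ∂μ := by ring
    _ ≤ W / μ s * ∫⁻ x in s, f x ^ p ∂μ := by
        gcongr
        rw [ENNReal.le_div_iff_mul_le (.inl hs) (.inl hs_top), mul_assoc, ← h_split, mul_assoc,
          ← ENNReal.mul_rpow_of_nonneg _ _ hp₀]
        exact hUW

end MaximalBound

section WeightedMaximalBound

variable {n : ℕ} {E : ℕ → Set (Fin n → ℝ)} {f : (Fin n → ℝ) → ℝ≥0∞} {p : ℝ} {U W : ℕ → ℝ≥0∞}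

lemma tsum_mul_sum_cornerAvg_rpow_le [NeZero n] (hp : 1 ≤ p) (hE : ∀ i, E i ⊆ farHalf n i)
    (hE₀ : ∀ i, volume (E i) ≠ 0) (hWU : ∀ m, ∑' k, W (m + k) ≤ U m)
    (hU : ∀ m k, U m ≤ 2 ^ k * U (m + k))
    (hUW : ∀ i, U i * (4 ^ (n * i) * volume (E i)) ^ p ≤ W i)
    (hf : Measurable f) (hf_supp : ∀ x, f x ≠ 0 → ∃ i, x ∈ E i) :
    ∑' j, W j * ∑ m ∈ Finset.range (j + 1), cornerAvg f m ^ p ≤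
      (∑' k, 4⁻¹ ^ k) ^ (p - 1) * (∑' k, 2⁻¹ ^ k) *
        ∑' i, W i / volume (E i) * ∫⁻ x in E i, f x ^ p := by
  have hE_top (i : ℕ) : volume (E i) ≠ ∞ :=
    measure_ne_top_of_subset (hE i) (by rw [farHalf, volume_Cube]; finiteness)
  have hU' (m k : ℕ) : 4⁻¹ ^ k * U m ≤ 2⁻¹ ^ k * U (m + k) := by
    have h_quarter : (4⁻¹ : ℝ≥0∞) ^ k * 2 ^ k = 2⁻¹ ^ k := by
      have h_four : (4 : ℝ≥0∞)⁻¹ = 2⁻¹ * 2⁻¹ := by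
        rw [← ENNReal.mul_inv (by simp) (by simp)]
        norm_num
      rw [← mul_pow, h_four, mul_assoc, ENNReal.inv_mul_cancel (by simp) (by simp), mul_one]
    calc 4⁻¹ ^ k * U m ≤ 4⁻¹ ^ k * (2 ^ k * U (m + k)) := by gcongr; exact hU m k
      _ = 2⁻¹ ^ k * U (m + k) := by rw [← mul_assoc, h_quarter]
  calc ∑' j, W j * ∑ m ∈ Finset.range (j + 1), cornerAvg f m ^ p
      = ∑' m, (∑' k, W (m + k)) * cornerAvg f m ^ p := tsum_mul_sum_range_succ _ _
    _ ≤ ∑' m, U m * (∑' k, 4⁻¹ ^ k * (4 ^ (n * (m + k)) * ∫⁻ y in E (m + k), f y)) ^ p := by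
        gcongr with m
        · exact hWU m
        · exact cornerAvg_le_tsum hE hf_supp m
    _ ≤ (∑' k, 4⁻¹ ^ k) ^ (p - 1) * (∑' k, 2⁻¹ ^ k) *
          ∑' i, U i * (4 ^ (n * i) * ∫⁻ y in E i, f y) ^ p :=
        tsum_mul_rpow_tsum_shift_le hp hU' fun i => 4 ^ (n * i) * ∫⁻ y in E i, f y
    _ ≤ (∑' k, 4⁻¹ ^ k) ^ (p - 1) * (∑' k, 2⁻¹ ^ k) *
          ∑' i, W i / volume (E i) * ∫⁻ x in E i, f x ^ p := by
        gcongr _ * ∑' i, ?_ with i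
        exact mul_setLIntegral_rpow_le hp (hE₀ i) (hE_top i) hf.aemeasurable (hUW i)

lemma setLIntegral_ballMaxFn_indicator_rpow_le (hp : 1 < p) {s : Set (Fin n → ℝ)}
    (hs : MeasurableSet s) (hf : Measurable f) :
    ∫⁻ x in s, ballMaxFn volume (s.indicator f) x ^ p ≤
      .ofReal (p / (p - 1)) * (2 * 5 ^ n) * 2 ^ (p - 1) * ∫⁻ x in s, f x ^ p := by
  calc ∫⁻ x in s, ballMaxFn volume (s.indicator f) x ^ p
      ≤ ∫⁻ x, ballMaxFn volume (s.indicator f) x ^ p := setLIntegral_le_lintegral _ _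
    _ ≤ .ofReal (p / (p - 1)) * (2 * 5 ^ n) * 2 ^ (p - 1) * ∫⁻ x, s.indicator f x ^ p :=
        lintegral_ballMaxFn_rpow_le (by finiteness) volume_ball_five_mul_le hp (hf.indicator hs)
    _ = .ofReal (p / (p - 1)) * (2 * 5 ^ n) * 2 ^ (p - 1) * ∫⁻ x in s, f x ^ p := by
        have h_pow (x : Fin n → ℝ) : s.indicator f x ^ p = s.indicator (fun x => f x ^ p) x := by
          by_cases hx : x ∈ s <;> simp [hx, zero_lt_one.trans hp]
        simp_rw [h_pow]
        rw [lintegral_indicator hs]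

lemma lintegral_MaxFn_rpow_mul_blockWeight_le [NeZero n] (hp : 0 < p)
    (hE : ∀ i, E i ⊆ farHalf n i) (hE_meas : ∀ i, MeasurableSet (E i))
    (hf_supp : ∀ x, f x ≠ 0 → ∃ i, x ∈ E i) :
    ∫⁻ x, MaxFn f x ^ p * blockWeight E W x ≤
      (2 ^ n) ^ p * (∑' j, W j / volume (E j) *
        ∫⁻ x in E j, ballMaxFn volume ((E j).indicator f) x ^ p) +
      (4 ^ n) ^ p * ∑' j, W j * ∑ m ∈ Finset.range (j + 1), cornerAvg f m ^ p := by
  have h_const (j : ℕ) (a : ℝ≥0∞) : W j / volume (E j) * (a * volume (E j)) ≤ a * W j := by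
    rw [mul_left_comm, mul_comm (W j / _)]
    gcongr
    exact ENNReal.mul_div_le
  calc ∫⁻ x, MaxFn f x ^ p * blockWeight E W x
      ≤ ∑' j, W j / volume (E j) * ∫⁻ x in E j, ((2 ^ n) ^ p *
          ballMaxFn volume ((E j).indicator f) x ^ p +
          (4 ^ n) ^ p * ∑ m ∈ Finset.range (j + 1), cornerAvg f m ^ p) := by
        refine lintegral_mul_blockFun_le hE_meas (fun j => ?_) fun j x hx => ?_
        · exact ((measurable_ballMaxFn.pow_const p).const_mul _).add_const _
        · refine (MaxFn_rpow_le hp hE hf_supp hx).trans_eq ?_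
          simp_rw [ENNReal.mul_rpow_of_nonneg _ _ hp.le, Finset.mul_sum]
    _ ≤ ∑' j, ((2 ^ n) ^ p * (W j / volume (E j) * ∫⁻ x in E j,
            ballMaxFn volume ((E j).indicator f) x ^ p) +
          (4 ^ n) ^ p * (W j * ∑ m ∈ Finset.range (j + 1), cornerAvg f m ^ p)) := by
        refine ENNReal.tsum_le_tsum fun j => ?_
        rw [lintegral_add_right _ measurable_const, lintegral_const_mul _
          (measurable_ballMaxFn.pow_const p), setLIntegral_const, mul_add, mul_left_comm,
          mul_comm (W j), ← mul_assoc ((4 ^ n) ^ p)]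
        exact add_le_add_right (h_const j _) _
    _ = _ := by rw [ENNReal.tsum_add, ENNReal.tsum_mul_left, ENNReal.tsum_mul_left]

theorem bddOn_MaxFn_blockWeight [NeZero n] (hp : 1 < p) (hE : ∀ i, E i ⊆ farHalf n i)
    (hE_meas : ∀ i, MeasurableSet (E i)) (hE₀ : ∀ i, volume (E i) ≠ 0)
    (hWU : ∀ m, ∑' k, W (m + k) ≤ U m) (hU : ∀ m k, U m ≤ 2 ^ k * U (m + k))
    (hUW : ∀ i, U i * (4 ^ (n * i) * volume (E i)) ^ p ≤ W i) :
    BddOn MaxFn p (blockWeight E W) (blockWeight E W) := by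
  have hp₀ : 0 < p := by linarith
  set A : ℝ≥0∞ := .ofReal (p / (p - 1)) * (2 * 5 ^ n) * 2 ^ (p - 1)
  set B : ℝ≥0∞ := (∑' k, 4⁻¹ ^ k) ^ (p - 1) * ∑' k, 2⁻¹ ^ k
  have hB : B ≠ ∞ := by
    have h_geom (k : ℕ) : (4⁻¹ : ℝ≥0∞) ^ k ≤ 2⁻¹ ^ k := by gcongr; norm_num
    have h_two : ∑' k, (2⁻¹ : ℝ≥0∞) ^ k ≠ ∞ := by simp
    have h_four : ∑' k, (4⁻¹ : ℝ≥0∞) ^ k ≠ ∞ :=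
      ne_top_of_le_ne_top h_two (ENNReal.tsum_le_tsum h_geom)
    finiteness
  refine bddOn_of_lintegral_le hp₀ (D := (2 ^ n) ^ p * A + (4 ^ n) ^ p * B) (by finiteness)
    fun f hf hf_zero => ?_
  have hf_supp (x : Fin n → ℝ) (hx : f x ≠ 0) : ∃ i, x ∈ E i :=
    exists_mem_of_blockFun_ne_zero (mt (hf_zero x) hx)
  set I := ∫⁻ x, f x ^ p * blockWeight E W x
  have hI : I = ∑' i, W i / volume (E i) * ∫⁻ x in E i, f x ^ p :=
    lintegral_mul_blockFun hE_meas (hf.pow_const p)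
  have h_local : ∑' j, W j / volume (E j) *
      ∫⁻ x in E j, ballMaxFn volume ((E j).indicator f) x ^ p ≤ A * I := by
    rw [hI, ← ENNReal.tsum_mul_left]
    simp_rw [mul_left_comm A]
    gcongr with j
    exact setLIntegral_ballMaxFn_indicator_rpow_le hp (hE_meas j) hf
  have h_tail : ∑' j, W j * ∑ m ∈ Finset.range (j + 1), cornerAvg f m ^ p ≤ B * I :=
    hI ▸ tsum_mul_sum_cornerAvg_rpow_le hp.le hE hE₀ hWU hU hUW hf hf_supp
  calc ∫⁻ x, MaxFn f x ^ p * blockWeight E W x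
      ≤ (2 ^ n) ^ p * (A * I) + (4 ^ n) ^ p * (B * I) := by
        grw [lintegral_MaxFn_rpow_mul_blockWeight_le hp₀ hE hE_meas hf_supp, h_local, h_tail]
    _ = ((2 ^ n) ^ p * A + (4 ^ n) ^ p * B) * I := by ring

end WeightedMaximalBound

section SparseOperator

variable {n : ℕ} {E : ℕ → Set (Fin n → ℝ)} {c : ℕ → ℝ≥0∞}

lemma sum_cornerAvg_le_TS (g : (Fin n → ℝ) → ℝ≥0∞) {j : ℕ} {x : Fin n → ℝ}
    (hx : x ∈ farHalf n j) : ∑ m ∈ Finset.range (j + 1), cornerAvg g m ≤ TS g x := by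
  set term : ℕ × ℕ → ℝ≥0∞ := fun q => (sCube n q.1 q.2).indicator
    (fun _ => (volume (sCube n q.1 q.2))⁻¹ * ∫⁻ y in sCube n q.1 q.2, g y) x
  have h_inj : Function.Injective fun m : ℕ => ((0, 2 * m) : ℕ × ℕ) := fun a b h => by simpa using h
  calc ∑ m ∈ Finset.range (j + 1), cornerAvg g m
      = ∑ m ∈ Finset.range (j + 1), term (0, 2 * m) := by
        refine Finset.sum_congr rfl fun m hm => ?_
        have hmj : m ≤ j := Nat.lt_succ_iff.1 (Finset.mem_range.1 hm)
        exact (indicator_of_mem (farHalf_subset_sCube hmj hx) fun _ => cornerAvg g m).symm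
    _ ≤ ∑' m, term (0, 2 * m) := ENNReal.sum_le_tsum _
    _ ≤ ∑' q, term q := ENNReal.tsum_comp_le_tsum_of_injective h_inj term

lemma le_cornerAvg_blockFun (hE_meas : ∀ i, MeasurableSet (E i))
    (hE : ∀ i, E i ⊆ farHalf n i) (i : ℕ) :
    c i * (4 ^ (n * i) * volume (E i)) ≤ cornerAvg (blockFun E c) i := by
  have h_le (x : Fin n → ℝ) (hx : x ∈ E i) : c i ≤ blockFun E c x :=
    (indicator_of_mem hx fun _ => c i).symm.trans_le
      (ENNReal.le_tsum (f := fun j => (E j).indicator (fun _ => c j) x) i)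
  rw [cornerAvg, volume_sCube_zero, inv_inv, mul_left_comm]
  gcongr
  calc c i * volume (E i) = ∫⁻ _ in E i, c i := (setLIntegral_const _ _).symm
    _ ≤ ∫⁻ x in E i, blockFun E c x := setLIntegral_mono' (hE_meas i) h_le
    _ ≤ ∫⁻ x in sCube n 0 (2 * i), blockFun E c x :=
        lintegral_mono_set ((hE i).trans (farHalf_subset_sCube le_rfl))

lemma sum_mul_le_TS_blockFun (hE_meas : ∀ i, MeasurableSet (E i))
    (hE : ∀ i, E i ⊆ farHalf n i) {j : ℕ} {x : Fin n → ℝ} (hx : x ∈ E j) :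
    ∑ i ∈ Finset.range (j + 1), c i * (4 ^ (n * i) * volume (E i)) ≤ TS (blockFun E c) x :=
  (Finset.sum_le_sum fun i _ => le_cornerAvg_blockFun hE_meas hE i).trans
    (sum_cornerAvg_le_TS _ (hE j hx))

end SparseOperator

section HarmonicSequences

/-- The masses `1 / ((i + 1) (i + 2))`, whose tails telescope to `1 / (m + 1)`. -/
def telescopingMass (i : ℕ) : ℝ≥0∞ := (i + 1 : ℝ≥0∞)⁻¹ * (i + 2 : ℝ≥0∞)⁻¹

lemma tsum_telescopingMass_shift_le (m : ℕ) :
    ∑' k, telescopingMass (m + k) ≤ (m + 1 : ℝ≥0∞)⁻¹ := by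
  refine tsum_shift_le_of_add_eq (U := fun i => (i + 1 : ℝ≥0∞)⁻¹) (fun i => ?_) m
  have h_cancel : (i + 2 : ℝ≥0∞) * (i + 2 : ℝ≥0∞)⁻¹ = 1 :=
    ENNReal.mul_inv_cancel (by simp) (by finiteness)
  have h_cancel' : (i + 1 : ℝ≥0∞) * (i + 1 : ℝ≥0∞)⁻¹ = 1 :=
    ENNReal.mul_inv_cancel (by simp) (by finiteness)
  calc telescopingMass i + ((i + 1 : ℕ) + 1 : ℝ≥0∞)⁻¹
      = (i + 1 : ℝ≥0∞)⁻¹ * (i + 2 : ℝ≥0∞)⁻¹ +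
          (i + 1 : ℝ≥0∞) * (i + 1 : ℝ≥0∞)⁻¹ * (i + 2 : ℝ≥0∞)⁻¹ := by
        rw [telescopingMass, h_cancel', one_mul, Nat.cast_add_one, add_assoc, one_add_one_eq_two]
    _ = (i + 1 : ℝ≥0∞)⁻¹ * ((i + 2 : ℝ≥0∞) * (i + 2 : ℝ≥0∞)⁻¹) := by ring
    _ = (i + 1 : ℝ≥0∞)⁻¹ := by rw [h_cancel, mul_one]

lemma inv_add_one_le_two_pow_mul (m k : ℕ) :
    (m + 1 : ℝ≥0∞)⁻¹ ≤ 2 ^ k * ((m + k : ℕ) + 1 : ℝ≥0∞)⁻¹ := by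
  have h_nat : m + k + 1 ≤ 2 ^ k * (m + 1) := by
    nlinarith [Nat.lt_two_pow_self (n := k), Nat.one_le_two_pow (n := k)]
  rw [← div_eq_mul_inv, ENNReal.le_div_iff_mul_le (by simp) (by simp), mul_comm,
    ← div_eq_mul_inv]
  exact ENNReal.div_le_of_le_mul (by exact_mod_cast h_nat)

lemma tsum_mul_telescopingMass_eq_top : ∑' j : ℕ, (j + 1 : ℝ≥0∞) * telescopingMass j = ∞ := by
  by_contra h_ne
  have h_term (j : ℕ) : ((j + 1 : ℝ≥0∞) * telescopingMass j).toReal = 1 / (j + 2 : ℕ) := by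
    rw [telescopingMass, ← mul_assoc, ENNReal.mul_inv_cancel (by simp) (by finiteness), one_mul]
    simp [ENNReal.toReal_add]
  have h_sum := ENNReal.summable_toReal h_ne
  simp_rw [h_term] at h_sum
  exact Real.not_summable_one_div_natCast ((summable_nat_add_iff 2).1 h_sum)

lemma tsum_add_one_rpow_neg_lt_top {p : ℝ} (hp : 1 < p) :
    ∑' j : ℕ, (j + 1 : ℝ≥0∞) ^ (-p) < ∞ := by
  have h_term (j : ℕ) : (j + 1 : ℝ≥0∞) ^ (-p) = .ofReal (1 / ((j + 1 : ℕ) : ℝ) ^ p) := by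
    rw [one_div, ← Real.rpow_neg (by positivity), ← ENNReal.ofReal_rpow_of_pos (by positivity),
      ENNReal.ofReal_natCast, Nat.cast_add_one]
  simp_rw [h_term, lt_top_iff_ne_top]
  exact ((summable_nat_add_iff 1).2 (Real.summable_one_div_nat_rpow.2 hp)).tsum_ofReal_ne_top

lemma add_one_le_sum_rpow_rpow {p : ℝ} (hp : 1 ≤ p) (j : ℕ) :
    (j + 1 : ℝ≥0∞) ≤ (∑ i ∈ Finset.range (j + 1), (i + 1 : ℝ≥0∞) ^ (p⁻¹ - 1)) ^ p := by
  have hp₀ : 0 < p := by linarith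
  have h_exp : 0 ≤ 1 - p⁻¹ := sub_nonneg.2 (inv_le_one_of_one_le₀ hp)
  rw [← ENNReal.rpow_inv_le_iff hp₀]
  calc (j + 1 : ℝ≥0∞) ^ p⁻¹
      = (j + 1) * (j + 1 : ℝ≥0∞) ^ (p⁻¹ - 1) := by
        nth_rw 2 [← ENNReal.rpow_one (j + 1)]
        rw [← ENNReal.rpow_add _ _ (by simp) (by finiteness), add_sub_cancel]
    _ = ∑ _i ∈ Finset.range (j + 1), (j + 1 : ℝ≥0∞) ^ (p⁻¹ - 1) := by simp
    _ ≤ ∑ i ∈ Finset.range (j + 1), (i + 1 : ℝ≥0∞) ^ (p⁻¹ - 1) := by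
        refine Finset.sum_le_sum fun i hi => ?_
        have hij : i ≤ j := Nat.lt_succ_iff.1 (Finset.mem_range.1 hi)
        rw [← neg_sub, ENNReal.rpow_neg, ENNReal.rpow_neg]
        gcongr

end HarmonicSequences

section Counterexample

/-- The cube in the near corner of `farHalf n i` whose density in `sCube n 0 (2 * i)` is
`2⁻ⁿ (i + 2) ^ (-1 / p)`. -/
def sparseBlock (n : ℕ) (p : ℝ) (i : ℕ) : Set (Fin n → ℝ) :=
  Cube n (fun _ => (1 / 4 : ℝ) ^ i / 2) ((1 / 4 : ℝ) ^ i / 2 * (i + 2 : ℝ) ^ (-(p * n)⁻¹))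

variable {n : ℕ} {p : ℝ}

lemma sparseBlock_subset_farHalf (hp : 0 ≤ p) (i : ℕ) : sparseBlock n p i ⊆ farHalf n i := by
  have h_le_one : (i + 2 : ℝ) ^ (-(p * n)⁻¹) ≤ 1 :=
    Real.rpow_le_one_of_one_le_of_nonpos (by linarith [(Nat.cast_nonneg i : (0 : ℝ) ≤ i)])
      (neg_nonpos.2 (by positivity))
  refine pi_mono fun k _ => Ico_subset_Ico_right ?_
  gcongr
  exact mul_le_of_le_one_right (by positivity) h_le_one

/-- The function on the blocks `sparseBlock n p i` whose integral over the `i`-th block is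
`(i + 1) ^ (1 / p - 1)` times the volume of the surrounding cube `sCube n 0 (2 * i)`. -/
def sparseTestFun (n : ℕ) (p : ℝ) : (Fin n → ℝ) → ℝ≥0∞ :=
  blockFun (sparseBlock n p) fun i =>
    (i + 1 : ℝ≥0∞) ^ (p⁻¹ - 1) / (4 ^ (n * i) * volume (sparseBlock n p i))

lemma volume_sparseBlock_ne_zero (i : ℕ) : volume (sparseBlock n p i) ≠ 0 := by
  rw [sparseBlock, volume_Cube]
  exact pow_ne_zero _ (ENNReal.ofReal_pos.2 (by positivity)).ne'

lemma volume_sparseBlock_ne_top (i : ℕ) : volume (sparseBlock n p i) ≠ ∞ := by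
  rw [sparseBlock, volume_Cube]
  finiteness

lemma measurableSet_sparseBlock (i : ℕ) : MeasurableSet (sparseBlock n p i) :=
  measurableSet_Cube _ _

lemma density_sparseBlock_eq (i : ℕ) :
    4 ^ (n * i) * volume (sparseBlock n p i) = (2⁻¹ * (i + 2 : ℝ≥0∞) ^ (-(p * n)⁻¹)) ^ n := by
  have h_quarter : (4 : ℝ≥0∞) ^ i * .ofReal ((1 / 4) ^ i) = 1 := by
    rw [← ENNReal.ofReal_ofNat, ← ENNReal.ofReal_pow (by norm_num),
      ← ENNReal.ofReal_mul (by positivity), ← mul_pow]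
    norm_num
  have h_base : ENNReal.ofReal (i + 2) = i + 2 := by
    rw [ENNReal.ofReal_add (by positivity) zero_le_two, ENNReal.ofReal_natCast,
      ENNReal.ofReal_ofNat]
  have h_half : ENNReal.ofReal 2⁻¹ = 2⁻¹ := by
    rw [ENNReal.ofReal_inv_of_pos two_pos, ENNReal.ofReal_ofNat]
  rw [sparseBlock, volume_Cube, mul_comm n, pow_mul, ← mul_pow, div_eq_mul_inv,
    ENNReal.ofReal_mul (by positivity), ENNReal.ofReal_mul (by positivity), ← mul_assoc,
    ← mul_assoc, h_quarter, one_mul, h_half, ← ENNReal.ofReal_rpow_of_pos (by positivity), h_base]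

lemma density_sparseBlock_rpow [NeZero n] (hp : 0 < p) (i : ℕ) :
    (4 ^ (n * i) * volume (sparseBlock n p i)) ^ p = (2⁻¹ ^ n) ^ p * (i + 2 : ℝ≥0∞)⁻¹ := by
  have hn : (n : ℝ) ≠ 0 := Nat.cast_ne_zero.2 (NeZero.ne n)
  have h_exp : -(p * n)⁻¹ * n * p = -1 := by field_simp
  rw [density_sparseBlock_eq, mul_pow, ENNReal.mul_rpow_of_nonneg _ _ hp.le,
    ← ENNReal.rpow_mul_natCast, ← ENNReal.rpow_mul, h_exp, ENNReal.rpow_neg_one]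

lemma inv_mul_density_sparseBlock_rpow_le [NeZero n] (hp : 0 < p) (i : ℕ) :
    (i + 1 : ℝ≥0∞)⁻¹ * (4 ^ (n * i) * volume (sparseBlock n p i)) ^ p ≤ telescopingMass i := by
  have h_le_one : ((2⁻¹ : ℝ≥0∞) ^ n) ^ p ≤ 1 :=
    ENNReal.rpow_le_one (pow_le_one₀ zero_le (by simp)) hp.le
  rw [density_sparseBlock_rpow hp, telescopingMass]
  gcongr
  exact mul_le_of_le_one_left' h_le_one

theorem bddOn_MaxFn_sparseBlock [NeZero n] (hp : 1 < p) :
    BddOn MaxFn p (blockWeight (sparseBlock n p) telescopingMass)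
      (blockWeight (sparseBlock n p) telescopingMass) :=
  have hp₀ : 0 < p := by linarith
  bddOn_MaxFn_blockWeight hp (sparseBlock_subset_farHalf hp₀.le) measurableSet_sparseBlock
    volume_sparseBlock_ne_zero tsum_telescopingMass_shift_le inv_add_one_le_two_pow_mul
    (inv_mul_density_sparseBlock_rpow_le hp₀)

lemma sparseTestFun_eq_zero {x : Fin n → ℝ}
    (hx : blockWeight (sparseBlock n p) telescopingMass x = 0) : sparseTestFun n p x = 0 := by
  refine blockFun_eq_zero_of_blockFun_eq_zero (fun i => ?_) hx
  exact ENNReal.div_ne_zero.2 ⟨by simp [telescopingMass], volume_sparseBlock_ne_top i⟩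

lemma sparseTestFun_coeff_rpow_mul_telescopingMass [NeZero n] (hp : 0 < p) (i : ℕ) :
    ((i + 1 : ℝ≥0∞) ^ (p⁻¹ - 1) / (4 ^ (n * i) * volume (sparseBlock n p i))) ^ p *
      telescopingMass i = ((2⁻¹ ^ n) ^ p)⁻¹ * (i + 1 : ℝ≥0∞) ^ (-p) := by
  have h_pow : ((i + 1 : ℝ≥0∞) ^ (p⁻¹ - 1)) ^ p * (i + 1 : ℝ≥0∞)⁻¹ = (i + 1 : ℝ≥0∞) ^ (-p) := by
    rw [← ENNReal.rpow_mul, ← ENNReal.rpow_neg_one,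
      ← ENNReal.rpow_add _ _ (by simp) (by finiteness)]
    congr 1
    field_simp
    ring
  have h_cancel : (i + 2 : ℝ≥0∞) * (i + 2 : ℝ≥0∞)⁻¹ = 1 :=
    ENNReal.mul_inv_cancel (by simp) (by finiteness)
  rw [ENNReal.div_rpow_of_nonneg _ _ hp.le, density_sparseBlock_rpow hp, telescopingMass,
    div_eq_mul_inv, ENNReal.mul_inv (.inr (by finiteness)) (.inr (by simp)), inv_inv]
  calc ((i + 1 : ℝ≥0∞) ^ (p⁻¹ - 1)) ^ p * (((2⁻¹ ^ n) ^ p)⁻¹ * (i + 2)) *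
        ((i + 1 : ℝ≥0∞)⁻¹ * (i + 2 : ℝ≥0∞)⁻¹)
      = ((2⁻¹ ^ n) ^ p)⁻¹ * (((i + 1 : ℝ≥0∞) ^ (p⁻¹ - 1)) ^ p * (i + 1 : ℝ≥0∞)⁻¹) *
          ((i + 2 : ℝ≥0∞) * (i + 2 : ℝ≥0∞)⁻¹) := by ring
    _ = ((2⁻¹ ^ n) ^ p)⁻¹ * (i + 1 : ℝ≥0∞) ^ (-p) := by rw [h_pow, h_cancel, mul_one]

theorem lintegral_sparseTestFun_rpow_lt_top [NeZero n] (hp : 1 < p) :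
    ∫⁻ x, sparseTestFun n p x ^ p * blockWeight (sparseBlock n p) telescopingMass x < ∞ := by
  have hp₀ : 0 < p := by linarith
  have h_const : ((2⁻¹ ^ n : ℝ≥0∞) ^ p)⁻¹ ≠ ∞ := by simp
  calc ∫⁻ x, sparseTestFun n p x ^ p * blockWeight (sparseBlock n p) telescopingMass x
      ≤ ∑' i : ℕ, ((i + 1 : ℝ≥0∞) ^ (p⁻¹ - 1) /
          (4 ^ (n * i) * volume (sparseBlock n p i))) ^ p * telescopingMass i :=
        lintegral_blockFun_rpow_mul_blockWeight_le measurableSet_sparseBlock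
          (pairwise_disjoint_of_subset_farHalf (sparseBlock_subset_farHalf hp₀.le))
    _ = ((2⁻¹ ^ n) ^ p)⁻¹ * ∑' i : ℕ, (i + 1 : ℝ≥0∞) ^ (-p) := by
        simp_rw [sparseTestFun_coeff_rpow_mul_telescopingMass hp₀, ENNReal.tsum_mul_left]
    _ < ∞ := ENNReal.mul_lt_top h_const.lt_top (tsum_add_one_rpow_neg_lt_top hp)

theorem lintegral_TS_sparseTestFun_rpow_eq_top (hp : 1 ≤ p) :
    ∫⁻ x, TS (sparseTestFun n p) x ^ p * blockWeight (sparseBlock n p) telescopingMass x = ∞ := by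
  have h_lower (j : ℕ) (x : Fin n → ℝ) (hx : x ∈ sparseBlock n p j) :
      (j + 1 : ℝ≥0∞) ≤ TS (sparseTestFun n p) x ^ p := by
    refine (add_one_le_sum_rpow_rpow hp j).trans (ENNReal.rpow_le_rpow ?_ (by linarith))
    refine le_trans (Finset.sum_le_sum fun i _ => ?_) (sum_mul_le_TS_blockFun
      measurableSet_sparseBlock (sparseBlock_subset_farHalf (by linarith)) hx)
    rw [ENNReal.div_mul_cancel
      (mul_ne_zero (by simp) (volume_sparseBlock_ne_zero i))
      (ENNReal.mul_ne_top (by finiteness) (volume_sparseBlock_ne_top i))]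
  refine top_le_iff.1 (tsum_mul_telescopingMass_eq_top.symm.trans_le ?_)
  exact tsum_mul_le_lintegral_mul_blockWeight measurableSet_sparseBlock
    volume_sparseBlock_ne_zero volume_sparseBlock_ne_top h_lower

end Counterexample

/-- For every `n ≥ 1` and `p ∈ (1,∞)` there is a single weight `w` such that
`M : L^p(w) → L^p(w)` is bounded while the sparse operator `T_S` is not bounded on `L^p(w)`;
in fact there is a (nonnegative) `f ∈ L^p(w)` with `‖T_S f‖_{L^p(w)} = ∞`. -/
theorem muckenhoupt_wheeden_sparse_one_weight (n : ℕ) (hn : 1 ≤ n) (p : ℝ) (hp : 1 < p) :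
    ∃ w : (Fin n → ℝ) → ℝ≥0∞, Measurable w ∧
      BddOn MaxFn p w w ∧
      ¬ BddOn TS p w w ∧
      ∃ f : (Fin n → ℝ) → ℝ≥0∞, Measurable f ∧ (∀ x, w x = 0 → f x = 0) ∧
        (∫⁻ x, f x ^ p * w x) < ∞ ∧ (∫⁻ x, TS f x ^ p * w x) = ∞ := by
  have : NeZero n := ⟨by omega⟩
  have h_meas (c : ℕ → ℝ≥0∞) : Measurable (blockFun (sparseBlock n p) c) :=
    measurable_blockFun measurableSet_sparseBlock
  have h_supp : ∀ x, blockWeight (sparseBlock n p) telescopingMass x = 0 →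
      sparseTestFun n p x = 0 := fun _ => sparseTestFun_eq_zero
  have h_lt_top := lintegral_sparseTestFun_rpow_lt_top (n := n) hp
  have h_eq_top := lintegral_TS_sparseTestFun_rpow_eq_top (n := n) hp.le
  exact ⟨blockWeight (sparseBlock n p) telescopingMass, h_meas _, bddOn_MaxFn_sparseBlock hp,
    not_bddOn_of_lintegral_eq_top (by linarith) (h_meas _) h_supp h_lt_top h_eq_top,
    sparseTestFun n p, h_meas _, h_supp, h_lt_top, h_eq_top⟩
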